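/- arXiv:2412.10541 — 2 statements merged into one kernel-verified Lean document; each statement's English description precedes it below -/
import Mathlib

section
/- (Corollary to Theorem 1.) Let m, L, U be positive integers. For each u = 1,…,U let ā_u ∈ ℂ^m, r_u ∈ ℂ^L, and d_u ≥ 0. Let A = [ā_1,…,ā_U] ∈ ℂ^{m×U} and Z = [r_1,…,r_U] ∈ ℂ^{L×U} be the matrices whose u-th columns are ā_u and r_u, respectively. Define the cost g(B) = Σ_{u=1}^U (‖B^H ā_u + r_u‖ − √(d_u))². Let B_t ∈ ℂ^{m×L} satisfy B_t^H ā_u + r_u ≠ 0 for all u, and define D_t = Σ_{u=1}^U [2√(d_u) ā_u (ā_u^H B_t + r_u^H)] / ‖B_t^H ā_u + r_u‖. Then for every B ∈ ℂ^{m×L}, g(B) ≤ ‖B^H A + Z‖_F² − Re{Tr(B^H D_t)} + c, where c = g(B_t) − ‖B_t^H A + Z‖_F² + Re{Tr(B_t^H D_t)}, and equality holds when B = B_t. -/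
open Matrix BigOperators

/-- Euclidean (ℓ2) norm of a complex vector. -/
noncomputable def vnorm {L : ℕ} (v : Fin L → ℂ) : ℝ :=
  Real.sqrt (∑ j, ‖v j‖ ^ 2)

/-- Frobenius norm of a complex matrix. -/
noncomputable def frobNorm {n₁ n₂ : ℕ} (M : Matrix (Fin n₁) (Fin n₂) ℂ) : ℝ :=
  Real.sqrt (∑ i, ∑ j, ‖M i j‖ ^ 2)

/-!
Since `(p - ρ)² = p² - 2ρp + ρ²`, the only non-quadratic part of `(‖w‖ - ρ)²` is the concave term
`-2ρ‖w‖`. By Cauchy–Schwarz `‖v‖ (‖w‖ - ‖v‖) ≥ Re ⟪v, w - v⟫`, that is, `w ↦ ‖w‖` lies above its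
tangent at any `v ≠ 0`, so replacing the norm by this tangent only increases `(‖w‖ - ρ)²`. Taking
for `w` and `v` the columns of `Bᴴ A + Z` and `Bₜᴴ A + Z` and summing over the columns, the
quadratic terms add up to the squared Frobenius norm and the tangent terms to
`Re Tr ((B - Bₜ)ᴴ Dₜ)`.
-/

section Tangent

open RCLike

variable {𝕜 E : Type*} [RCLike 𝕜] [SeminormedAddCommGroup E] [InnerProductSpace 𝕜 E]

theorem re_inner_sub_self_le_norm_mul (v w : E) :
    re (inner 𝕜 v (w - v)) ≤ ‖v‖ * (‖w‖ - ‖v‖) := by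
  calc re (inner 𝕜 v (w - v)) = re (inner 𝕜 v w) - ‖v‖ ^ 2 := by
        rw [inner_sub_right, map_sub, inner_self_eq_norm_sq]
    _ ≤ ‖v‖ * ‖w‖ - ‖v‖ ^ 2 := by gcongr; exact re_inner_le_norm v w
    _ = ‖v‖ * (‖w‖ - ‖v‖) := by ring

theorem sq_norm_sub_le_tangent {v : E} (hv : ‖v‖ ≠ 0) {ρ : ℝ} (hρ : 0 ≤ ρ) (w : E) :
    (‖w‖ - ρ) ^ 2 ≤
      ‖w‖ ^ 2 - ‖v‖ ^ 2 - 2 * ρ / ‖v‖ * re (inner 𝕜 v (w - v)) + (‖v‖ - ρ) ^ 2 := by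
  have tangent_le : 2 * ρ / ‖v‖ * re (inner 𝕜 v (w - v)) ≤ 2 * ρ * (‖w‖ - ‖v‖) :=
    calc 2 * ρ / ‖v‖ * re (inner 𝕜 v (w - v))
        ≤ 2 * ρ / ‖v‖ * (‖v‖ * (‖w‖ - ‖v‖)) := by
          gcongr; exact re_inner_sub_self_le_norm_mul v w
      _ = 2 * ρ * (‖w‖ - ‖v‖) := by field_simp
  linarith

end Tangent

theorem trace_mul_vecMulVec {m n R : Type*} [Fintype m] [Fintype n] [NonUnitalSemiring R]
    (M : Matrix n m R) (x : m → R) (y : n → R) :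
    (M * vecMulVec x y).trace = (M *ᵥ x) ⬝ᵥ y := by
  rw [mul_vecMulVec, trace_vecMulVec]

section Majorant

open RCLike
open scoped Matrix.Norms.Frobenius

theorem frobenius_norm_sq_eq_sum_norm_col_sq {m n α : Type*} [Fintype m] [Fintype n]
    [SeminormedAddCommGroup α] (M : Matrix m n α) :
    ‖M‖ ^ 2 = ∑ j, ‖WithLp.toLp 2 (M.col j)‖ ^ 2 := by
  simp only [PiLp.norm_sq_eq_of_L2, col_apply]
  rw [frobenius_norm_def, ← Real.sqrt_eq_rpow, Real.sq_sqrt (by positivity), Finset.sum_comm]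
  simp only [Real.rpow_two]

variable {𝕜 m n ι : Type*} [RCLike 𝕜] [Fintype m]

/-- The vector `Bᴴ āᵤ + rᵤ`, where `āᵤ` and `rᵤ` are the `u`-th columns of `A` and `Z`, as an
element of Euclidean space so that its norm is the `ℓ²` norm. -/
def beamResponse (A : Matrix m ι 𝕜) (Z : Matrix n ι 𝕜) (B : Matrix m n 𝕜) (u : ι) :
    EuclideanSpace 𝕜 n :=
  WithLp.toLp 2 (Bᴴ *ᵥ A.col u + Z.col u)

theorem beamResponse_sub_beamResponse (A : Matrix m ι 𝕜) (Z : Matrix n ι 𝕜) (B Bt : Matrix m n 𝕜)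
    (u : ι) :
    beamResponse A Z B u - beamResponse A Z Bt u = WithLp.toLp 2 ((B - Bt)ᴴ *ᵥ A.col u) := by
  rw [beamResponse, beamResponse, ← WithLp.toLp_sub, add_sub_add_right_eq_sub, ← sub_mulVec,
    ← conjTranspose_sub]

variable [Fintype n] [Fintype ι]

/-- The beampattern matching cost `g`, for target magnitudes `ρᵤ` in place of `√dᵤ`. -/
noncomputable def matchingCost (A : Matrix m ι 𝕜) (Z : Matrix n ι 𝕜) (ρ : ι → ℝ)
    (B : Matrix m n 𝕜) : ℝ :=
  ∑ u, (‖beamResponse A Z B u‖ - ρ u) ^ 2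

/-- The matrix `Dₜ` of the paper, whose real trace pairing with `B` is the linear part of the
majorant. -/
noncomputable def tangentMatrix (A : Matrix m ι 𝕜) (Z : Matrix n ι 𝕜) (ρ : ι → ℝ)
    (Bt : Matrix m n 𝕜) : Matrix m n 𝕜 :=
  ∑ u, ((2 * ρ u / ‖beamResponse A Z Bt u‖ : ℝ) : 𝕜) •
    vecMulVec (A.col u) (star (beamResponse A Z Bt u).ofLp)

/-- The quadratic majorant of the matching cost at `Bt`, including the paper's constant `c`. The
norm of a matrix is the Frobenius norm. -/
noncomputable def matchingMajorant (A : Matrix m ι 𝕜) (Z : Matrix n ι 𝕜) (ρ : ι → ℝ)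
    (Bt B : Matrix m n 𝕜) : ℝ :=
  ‖Bᴴ * A + Z‖ ^ 2 - re (Bᴴ * tangentMatrix A Z ρ Bt).trace +
    (matchingCost A Z ρ Bt - ‖Btᴴ * A + Z‖ ^ 2 + re (Btᴴ * tangentMatrix A Z ρ Bt).trace)

variable (A : Matrix m ι 𝕜) (Z : Matrix n ι 𝕜) (ρ : ι → ℝ) (B Bt : Matrix m n 𝕜)

theorem frobenius_norm_sq_eq_sum_norm_beamResponse_sq :
    ‖Bᴴ * A + Z‖ ^ 2 = ∑ u, ‖beamResponse A Z B u‖ ^ 2 :=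
  frobenius_norm_sq_eq_sum_norm_col_sq (Bᴴ * A + Z)

theorem re_trace_mul_tangentMatrix_sub :
    re (Bᴴ * tangentMatrix A Z ρ Bt).trace - re (Btᴴ * tangentMatrix A Z ρ Bt).trace =
      ∑ u, 2 * ρ u / ‖beamResponse A Z Bt u‖ *
        re (inner 𝕜 (beamResponse A Z Bt u) (beamResponse A Z B u - beamResponse A Z Bt u)) := by
  rw [← map_sub, ← trace_sub, ← Matrix.sub_mul, ← conjTranspose_sub, tangentMatrix,
    Matrix.mul_sum, trace_sum, map_sum]
  refine Finset.sum_congr rfl fun u _ => ?_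
  rw [Matrix.mul_smul, trace_smul, smul_eq_mul, re_ofReal_mul, trace_mul_vecMulVec,
    beamResponse_sub_beamResponse, EuclideanSpace.inner_eq_star_dotProduct]

theorem matchingMajorant_eq_sum :
    matchingMajorant A Z ρ Bt B =
      ∑ u, (‖beamResponse A Z B u‖ ^ 2 - ‖beamResponse A Z Bt u‖ ^ 2 -
        2 * ρ u / ‖beamResponse A Z Bt u‖ *
          re (inner 𝕜 (beamResponse A Z Bt u) (beamResponse A Z B u - beamResponse A Z Bt u)) +
        (‖beamResponse A Z Bt u‖ - ρ u) ^ 2) := by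
  rw [Finset.sum_add_distrib, Finset.sum_sub_distrib, Finset.sum_sub_distrib,
    ← re_trace_mul_tangentMatrix_sub, ← frobenius_norm_sq_eq_sum_norm_beamResponse_sq,
    ← frobenius_norm_sq_eq_sum_norm_beamResponse_sq, ← matchingCost, matchingMajorant]
  ring

theorem matchingMajorant_self : matchingMajorant A Z ρ Bt Bt = matchingCost A Z ρ Bt := by
  rw [matchingMajorant]
  ring

variable {A Z ρ Bt}

theorem matchingCost_le_matchingMajorant (hρ : ∀ u, 0 ≤ ρ u)
    (hne : ∀ u, beamResponse A Z Bt u ≠ 0) :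
    matchingCost A Z ρ B ≤ matchingMajorant A Z ρ Bt B := by
  rw [matchingMajorant_eq_sum]
  exact Finset.sum_le_sum fun u _ =>
    sq_norm_sub_le_tangent (norm_ne_zero_iff.mpr (hne u)) (hρ u) (beamResponse A Z B u)

theorem stmt2_general (hρ : ∀ u, 0 ≤ ρ u) (hne : ∀ u, beamResponse A Z Bt u ≠ 0) :
    (∀ B, matchingCost A Z ρ B ≤ matchingMajorant A Z ρ Bt B) ∧
      matchingCost A Z ρ Bt = matchingMajorant A Z ρ Bt Bt :=
  ⟨fun B => matchingCost_le_matchingMajorant B hρ hne, (matchingMajorant_self A Z ρ Bt).symm⟩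

theorem vnorm_eq_norm_toLp {L : ℕ} (v : Fin L → ℂ) : vnorm v = ‖WithLp.toLp 2 v‖ :=
  (EuclideanSpace.norm_eq (WithLp.toLp 2 v)).symm

theorem frobNorm_eq_norm {n₁ n₂ : ℕ} (M : Matrix (Fin n₁) (Fin n₂) ℂ) : frobNorm M = ‖M‖ := by
  rw [frobenius_norm_def, ← Real.sqrt_eq_rpow, frobNorm]
  simp only [Real.rpow_two]

end Majorant

/-- Corollary to Theorem 1: the beampattern matching cost `g` is majorized at
`Bt` by a convex quadratic function of `B`. -/
theorem stmt2 {m L U : ℕ} (hm : 0 < m) (hL : 0 < L) (hU : 0 < U)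
    (a : Fin U → Fin m → ℂ) (r : Fin U → Fin L → ℂ) (d : Fin U → ℝ)
    (hd : ∀ u, 0 ≤ d u)
    (A : Matrix (Fin m) (Fin U) ℂ) (hA : A = Matrix.of fun i u => a u i)
    (Z : Matrix (Fin L) (Fin U) ℂ) (hZ : Z = Matrix.of fun j u => r u j)
    (g : Matrix (Fin m) (Fin L) ℂ → ℝ)
    (hg : g = fun B => ∑ u, (vnorm (Bᴴ *ᵥ a u + r u) - Real.sqrt (d u)) ^ 2)
    (Bt : Matrix (Fin m) (Fin L) ℂ)
    (hne : ∀ u, Btᴴ *ᵥ a u + r u ≠ 0)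
    (Dt : Matrix (Fin m) (Fin L) ℂ)
    (hDt : Dt = ∑ u, Matrix.of (fun i j =>
      ((2 * Real.sqrt (d u) / vnorm (Btᴴ *ᵥ a u + r u) : ℝ) : ℂ) *
        (a u i * star ((Btᴴ *ᵥ a u + r u) j))))
    (c : ℝ)
    (hc : c = g Bt - frobNorm (Btᴴ * A + Z) ^ 2 + (Matrix.trace (Btᴴ * Dt)).re) :
    (∀ B : Matrix (Fin m) (Fin L) ℂ,
      g B ≤ frobNorm (Bᴴ * A + Z) ^ 2 - (Matrix.trace (Bᴴ * Dt)).re + c) ∧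
    g Bt = frobNorm (Btᴴ * A + Z) ^ 2 - (Matrix.trace (Btᴴ * Dt)).re + c := by
  subst hA hZ hg hDt hc
  simp only [vnorm_eq_norm_toLp, frobNorm_eq_norm]
  exact stmt2_general (fun u => Real.sqrt_nonneg (d u))
    (fun u => (WithLp.toLp_eq_zero 2).not.mpr (hne u))
end

section
/- Let m, L be positive integers, let M ∈ ℂ^{m×m} be Hermitian positive semidefinite, let G ∈ ℂ^{m×L}, let λ ≥ 0 be a real number, and let c > 0. Suppose B* ∈ ℂ^{m×L} satisfies (M + λ I_m) B* = G and ‖B*‖_F² = c. Then B* is a global minimizer of the function f(B) = Re{Tr(B^H M B)} − 2 Re{Tr(B^H G)} over the set {B ∈ ℂ^{m×L} : ‖B‖_F² = c}; that is, for every B with ‖B‖_F² = c, f(B) ≥ f(B*). -/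
open Matrix BigOperators
open scoped ComplexOrder

/-- Squared Frobenius norm of a complex matrix. -/
noncomputable def frobSq {n₁ n₂ : ℕ} (M : Matrix (Fin n₁) (Fin n₂) ℂ) : ℝ :=
  ∑ i, ∑ j, ‖M i j‖ ^ 2

/-!
Let `H = M + r • 1` and suppose `H * X = G`. On a Frobenius sphere `r * ‖B‖ ^ 2` is constant, so `M`
may be replaced by `H` in the objective. Completing the square shows that the new objective exceeds
its value at `X` by `Re Tr((B - X)ᴴ H (B - X))`, which is nonnegative as `H` is positive
semidefinite.
-/

section QuadObjective

open scoped Matrix.Norms.Frobenius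

variable {𝕜 n p : Type*} [RCLike 𝕜] [Fintype n] [Fintype p]

/-- The matrix quadratic `Re Tr(Bᴴ M B) - 2 Re Tr(Bᴴ G)` minimized in the trust-region subproblem.
The factor `2` makes `M * B = G` the stationarity equation when `M` is Hermitian. -/
noncomputable def quadObjective (M : Matrix n n 𝕜) (G B : Matrix n p 𝕜) : ℝ :=
  RCLike.re (trace (Bᴴ * M * B)) - 2 * RCLike.re (trace (Bᴴ * G))

theorem frobenius_norm_sq {α : Type*} [SeminormedAddCommGroup α] (B : Matrix n p α) :
    ‖B‖ ^ 2 = ∑ i, ∑ j, ‖B i j‖ ^ 2 := by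
  rw [frobenius_norm_def, ← Real.sqrt_eq_rpow, Real.sq_sqrt (by positivity)]
  simp only [Real.rpow_two]

theorem re_trace_conjTranspose_mul_self (B : Matrix n p 𝕜) :
    RCLike.re (trace (Bᴴ * B)) = ‖B‖ ^ 2 := by
  rw [frobenius_norm_sq, Finset.sum_comm]
  simp only [trace, diag_apply, mul_apply, conjTranspose_apply, RCLike.star_def, RCLike.conj_mul,
    map_sum, ← RCLike.ofReal_pow, RCLike.ofReal_re]

theorem re_trace_conjTranspose_mul_mul_comm {H : Matrix n n 𝕜} (hH : H.IsHermitian)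
    (A B : Matrix n p 𝕜) :
    RCLike.re (trace (Aᴴ * H * B)) = RCLike.re (trace (Bᴴ * H * A)) := by
  have conjTranspose_eq : (Aᴴ * H * B)ᴴ = Bᴴ * H * A := by
    simp only [conjTranspose_mul, conjTranspose_conjTranspose, hH.eq, Matrix.mul_assoc]
  rw [← conjTranspose_eq, trace_conjTranspose, RCLike.star_def, RCLike.conj_re]

theorem quadObjective_sub_quadObjective_of_isHermitian {H : Matrix n n 𝕜} (hH : H.IsHermitian)
    (X B : Matrix n p 𝕜) :
    quadObjective H (H * X) B - quadObjective H (H * X) X =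
      RCLike.re (trace ((B - X)ᴴ * H * (B - X))) := by
  have cross_comm := re_trace_conjTranspose_mul_mul_comm hH X B
  simp only [quadObjective, conjTranspose_sub, Matrix.sub_mul, Matrix.mul_sub, trace_sub, map_sub,
    ← Matrix.mul_assoc]
  linarith

theorem quadObjective_le_of_posSemidef {H : Matrix n n 𝕜} (hH : H.PosSemidef)
    (X B : Matrix n p 𝕜) : quadObjective H (H * X) X ≤ quadObjective H (H * X) B := by
  rw [← sub_nonneg, quadObjective_sub_quadObjective_of_isHermitian hH.isHermitian]
  exact (RCLike.nonneg_iff.mp (hH.conjTranspose_mul_mul_same (B - X)).trace_nonneg).1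

theorem quadObjective_add_smul_one [DecidableEq n] (M : Matrix n n 𝕜) (r : ℝ)
    (G B : Matrix n p 𝕜) :
    quadObjective (M + (r : 𝕜) • 1) G B = quadObjective M G B + r * ‖B‖ ^ 2 := by
  simp only [quadObjective, Matrix.mul_add, Matrix.add_mul, Matrix.mul_smul, Matrix.smul_mul,
    Matrix.mul_one, trace_add, trace_smul, map_add, smul_eq_mul, RCLike.re_ofReal_mul,
    re_trace_conjTranspose_mul_self]
  ring

theorem stmt7_general [DecidableEq n] {M : Matrix n n 𝕜} {G X : Matrix n p 𝕜} {r : ℝ}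
    (hMr : (M + (r : 𝕜) • (1 : Matrix n n 𝕜)).PosSemidef)
    (hstat : (M + (r : 𝕜) • (1 : Matrix n n 𝕜)) * X = G) :
    IsMinOn (quadObjective M G) (Metric.sphere 0 ‖X‖) X := by
  intro B hB
  have hnorm : ‖B‖ = ‖X‖ := mem_sphere_zero_iff_norm.mp hB
  have shifted_le := quadObjective_le_of_posSemidef hMr X B
  rw [hstat, quadObjective_add_smul_one, quadObjective_add_smul_one, hnorm] at shifted_le
  exact le_of_add_le_add_right shifted_le

theorem mem_sphere_zero_norm_iff_frobSq_eq {n₁ n₂ : ℕ} {B X : Matrix (Fin n₁) (Fin n₂) ℂ} :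
    B ∈ Metric.sphere 0 ‖X‖ ↔ frobSq B = frobSq X := by
  rw [mem_sphere_zero_iff_norm, ← sq_eq_sq₀ (norm_nonneg B) (norm_nonneg X),
    frobenius_norm_sq, frobenius_norm_sq, frobSq, frobSq]

end QuadObjective

/-- Global optimality of the KKT point of the trust-region subproblem: if
`(M + λ I) B* = G` with `λ ≥ 0` and `‖B*‖_F² = c`, then `B*` minimizes
`Re Tr(Bᴴ M B) − 2 Re Tr(Bᴴ G)` over the sphere `‖B‖_F² = c`. -/
theorem stmt7 {m L : ℕ} (hm : 0 < m) (hL : 0 < L)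
    (M : Matrix (Fin m) (Fin m) ℂ) (hM : M.PosSemidef)
    (G : Matrix (Fin m) (Fin L) ℂ)
    (lam : ℝ) (hlam : 0 ≤ lam) (c : ℝ) (hc : 0 < c)
    (Bstar : Matrix (Fin m) (Fin L) ℂ)
    (hstat : (M + (lam : ℂ) • (1 : Matrix (Fin m) (Fin m) ℂ)) * Bstar = G)
    (hBc : frobSq Bstar = c) :
    ∀ B : Matrix (Fin m) (Fin L) ℂ, frobSq B = c →
      (Matrix.trace (Bstarᴴ * M * Bstar)).re - 2 * (Matrix.trace (Bstarᴴ * G)).re ≤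
        (Matrix.trace (Bᴴ * M * B)).re - 2 * (Matrix.trace (Bᴴ * G)).re :=
  fun _ hB => stmt7_general (hM.add (PosSemidef.one.smul (Complex.zero_le_real.mpr hlam))) hstat
    (mem_sphere_zero_norm_iff_frobSq_eq.mpr (hB.trans hBc.symm))
end
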